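/- Define the rational functions of s ∈ ℂ: t(s) = (s−1)(s+3)³/(16s³) and y(s) = (s+1)(s+3)²/(2s(15+s²)). Then for every s ∈ ℂ such that s ≠ 0, 15+s² ≠ 0, t'(s) ≠ 0, t(s) ∉ {0,1}, and y(s) ∉ {0, 1, t(s)}, the pair (t, y) is a parametric solution of the sixth Painlevé equation PVI(α,β,γ,δ) at s with θ-tuple (θ₀, θ₁, θ_t, θ_∞) = (0, 0, 1/2, 0), i.e. α = 1/2, β = 0, γ = 0, δ = 3/8. -/

import Mathlib

noncomputable def tFun12 : ℂ → ℂ := fun s => (s-1)*(s+3)^3/(16*s^3)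

noncomputable def yFun12 : ℂ → ℂ := fun s => (s+1)*(s+3)^2/(2*s*(15+s^2))

/-!
The substitution `s ↦ -s` sends `(t, y)` to `(1 - t, 1 - y)`. With `β = γ = 0` the right-hand side
of PVI can be written in terms of `2t - 1`, `t(t - 1)`, `2y - 1`, `y(y - 1)` and `y - t`, each of
which is even or odd under this involution. As functions of `s`, the quantities `t(t - 1)`,
`y(y - 1)`, `y - t` and `t'` are, up to constants, products of powers of `s`, `s² - 1`, `s² - 5`,
`s² - 9` and `15 + s²`. Only these factors occur in the denominators of the equation, so its
coefficients have short closed forms and PVI becomes an identity of rational functions.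
-/

/-- The value that the sixth Painlevé equation with parameters `α, β, γ, δ` prescribes for `y''`,
as a function of `t`, `y` and `p = y'`. The variables are plain field elements, and the value is
meaningful only for `t ∉ {0, 1}` and `y ∉ {0, 1, t}`, since `x / 0 = 0`. -/
def painleveVIRhs {K : Type*} [Field K] (α β γ δ t y p : K) : K :=
  (1 / 2) * (1 / y + 1 / (y - 1) + 1 / (y - t)) * p ^ 2
    - (1 / t + 1 / (t - 1) + 1 / (y - t)) * p
    + (y * (y - 1) * (y - t) / (t ^ 2 * (t - 1) ^ 2)) *
      (α + β * t / y ^ 2 + γ * (t - 1) / (y - 1) ^ 2 + δ * t * (t - 1) / (y - t) ^ 2)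

theorem one_div_add_one_div_sub_one {K : Type*} [Field K] {x : K} (hx0 : x ≠ 0) (hx1 : x ≠ 1) :
    1 / x + 1 / (x - 1) = (2 * x - 1) / (x * (x - 1)) := by
  rw [one_div_add_one_div hx0 (sub_ne_zero.2 hx1)]
  ring

theorem painleveVIRhs_zero_zero {K : Type*} [Field K] (α δ p : K) {t y : K}
    (ht0 : t ≠ 0) (ht1 : t ≠ 1) (hy0 : y ≠ 0) (hy1 : y ≠ 1) (hyt : y ≠ t) :
    painleveVIRhs α 0 0 δ t y p =
      (1 / 2) * ((2 * y - 1) / (y * (y - 1)) + 1 / (y - t)) * p ^ 2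
        - ((2 * t - 1) / (t * (t - 1)) + 1 / (y - t)) * p
        + y * (y - 1) / (t * (t - 1)) * (α * ((y - t) / (t * (t - 1))) + δ / (y - t)) := by
  have ht1' : t - 1 ≠ 0 := sub_ne_zero.2 ht1
  have hyt' : y - t ≠ 0 := sub_ne_zero.2 hyt
  rw [painleveVIRhs, one_div_add_one_div_sub_one hy0 hy1, one_div_add_one_div_sub_one ht0 ht1]
  congr 1
  field_simp
  ring

section

variable {s : ℂ}

theorem two_mul_tFun12_sub_one (hs : s ≠ 0) :
    2 * tFun12 s - 1 = (s ^ 4 + 18 * s ^ 2 - 27) / (8 * s ^ 3) := by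
  rw [tFun12]
  field_simp
  ring

theorem tFun12_mul_tFun12_sub_one (hs : s ≠ 0) :
    tFun12 s * (tFun12 s - 1) = (s ^ 2 - 1) * (s ^ 2 - 9) ^ 3 / (256 * s ^ 6) := by
  rw [tFun12]
  field_simp
  ring

theorem two_mul_yFun12_sub_one (hs : s ≠ 0) (hs15 : 15 + s ^ 2 ≠ 0) :
    2 * yFun12 s - 1 = (7 * s ^ 2 + 9) / (s * (15 + s ^ 2)) := by
  rw [yFun12]
  field_simp
  ring

theorem yFun12_mul_yFun12_sub_one (hs : s ≠ 0) (hs15 : 15 + s ^ 2 ≠ 0) :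
    yFun12 s * (yFun12 s - 1) =
      -((s ^ 2 - 1) * (s ^ 2 - 9) ^ 2) / (4 * s ^ 2 * (15 + s ^ 2) ^ 2) := by
  rw [yFun12]
  field_simp
  ring

theorem yFun12_sub_tFun12 (hs : s ≠ 0) (hs15 : 15 + s ^ 2 ≠ 0) :
    yFun12 s - tFun12 s = -((s ^ 2 - 9) ^ 2 * (s ^ 2 - 5)) / (16 * s ^ 3 * (15 + s ^ 2)) := by
  rw [yFun12, tFun12]
  field_simp
  ring

theorem deriv_tFun12 (hs : s ≠ 0) : deriv tFun12 s = (s ^ 2 - 9) ^ 2 / (16 * s ^ 4) := by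
  have hnum : HasDerivAt (fun u : ℂ => (u - 1) * (u + 3) ^ 3) (4 * s * (s + 3) ^ 2) s := by
    refine (((hasDerivAt_id' s).sub_const 1).fun_mul
      (((hasDerivAt_id' s).add_const 3).fun_pow 3)).congr_deriv ?_
    push_cast
    ring
  have hden : HasDerivAt (fun u : ℂ => 16 * u ^ 3) (48 * s ^ 2) s :=
    ((hasDerivAt_pow 3 s).const_mul 16).congr_deriv (by push_cast; ring)
  refine (hnum.fun_div hden (by simp [hs])).deriv.trans ?_
  field_simp
  ring

theorem deriv_yFun12 (hs : s ≠ 0) (hs15 : 15 + s ^ 2 ≠ 0) :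
    deriv yFun12 s = -((s ^ 2 - 9) * (7 * s ^ 2 - 15)) / (2 * s ^ 2 * (15 + s ^ 2) ^ 2) := by
  have hnum : HasDerivAt (fun u : ℂ => (u + 1) * (u + 3) ^ 2) ((s + 3) * (3 * s + 5)) s := by
    refine (((hasDerivAt_id' s).add_const 1).fun_mul
      (((hasDerivAt_id' s).add_const 3).fun_pow 2)).congr_deriv ?_
    push_cast
    ring
  have hden : HasDerivAt (fun u : ℂ => 2 * u * (15 + u ^ 2)) (6 * s ^ 2 + 30) s := by
    refine (((hasDerivAt_id' s).const_mul 2).fun_mul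
      ((hasDerivAt_pow 2 s).const_add 15)).congr_deriv ?_
    push_cast
    ring
  refine (hnum.fun_div hden (by simp [hs, hs15])).deriv.trans ?_
  field_simp
  ring

theorem deriv_yFun12_div_deriv_tFun12
    (hs : s ≠ 0) (hs15 : 15 + s ^ 2 ≠ 0) (hs9 : s ^ 2 - 9 ≠ 0) :
    deriv yFun12 s / deriv tFun12 s =
      -8 * s ^ 2 * (7 * s ^ 2 - 15) / ((15 + s ^ 2) ^ 2 * (s ^ 2 - 9)) := by
  rw [deriv_yFun12 hs hs15, deriv_tFun12 hs]
  field_simp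
  ring

theorem deriv_deriv_yFun12_div_deriv_tFun12
    (hs : s ≠ 0) (hs15 : 15 + s ^ 2 ≠ 0) (hs9 : s ^ 2 - 9 ≠ 0) :
    deriv (fun u => deriv yFun12 u / deriv tFun12 u) s =
      16 * s * (7 * s ^ 6 - 135 * s ^ 4 + 2025 * s ^ 2 - 2025) /
        ((15 + s ^ 2) ^ 3 * (s ^ 2 - 9) ^ 2) := by
  have hslope : (fun u => deriv yFun12 u / deriv tFun12 u) =ᶠ[nhds s]
      fun u => -8 * u ^ 2 * (7 * u ^ 2 - 15) / ((15 + u ^ 2) ^ 2 * (u ^ 2 - 9)) := by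
    have hu15 : ∀ᶠ u in nhds s, 15 + u ^ 2 ≠ 0 := ContinuousAt.eventually_ne (by fun_prop) hs15
    have hu9 : ∀ᶠ u in nhds s, u ^ 2 - 9 ≠ 0 := ContinuousAt.eventually_ne (by fun_prop) hs9
    filter_upwards [eventually_ne_nhds hs, hu15, hu9] with u hu hu15 hu9
    exact deriv_yFun12_div_deriv_tFun12 hu hu15 hu9
  have hsq : HasDerivAt (fun u : ℂ => u ^ 2) (2 * s) s := by simpa using hasDerivAt_pow 2 s
  have hnum : HasDerivAt (fun u : ℂ => -8 * u ^ 2 * (7 * u ^ 2 - 15))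
      (-16 * s * (14 * s ^ 2 - 15)) s :=
    ((hsq.const_mul (-8)).fun_mul ((hsq.const_mul 7).sub_const 15)).congr_deriv (by ring)
  have hden : HasDerivAt (fun u : ℂ => (15 + u ^ 2) ^ 2 * (u ^ 2 - 9))
      (6 * s * (15 + s ^ 2) * (s ^ 2 - 1)) s := by
    refine (((hsq.const_add 15).fun_pow 2).fun_mul (hsq.sub_const 9)).congr_deriv ?_
    push_cast
    ring
  rw [hslope.deriv_eq, (hnum.fun_div hden (by positivity)).deriv]
  field_simp
  ring

theorem painleveVI_quadratic_coeff (hs : s ≠ 0) (hs15 : 15 + s ^ 2 ≠ 0) (hs1 : s ^ 2 - 1 ≠ 0)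
    (hs5 : s ^ 2 - 5 ≠ 0) (hs9 : s ^ 2 - 9 ≠ 0) :
    (2 * yFun12 s - 1) / (yFun12 s * (yFun12 s - 1)) + 1 / (yFun12 s - tFun12 s) =
      -4 * s * (15 + s ^ 2) * (11 * s ^ 4 - 30 * s ^ 2 - 45) /
        ((s ^ 2 - 1) * (s ^ 2 - 5) * (s ^ 2 - 9) ^ 2) := by
  rw [two_mul_yFun12_sub_one hs hs15, yFun12_mul_yFun12_sub_one hs hs15, yFun12_sub_tFun12 hs hs15]
  field_simp
  ring

theorem painleveVI_linear_coeff (hs : s ≠ 0) (hs15 : 15 + s ^ 2 ≠ 0) (hs1 : s ^ 2 - 1 ≠ 0)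
    (hs5 : s ^ 2 - 5 ≠ 0) (hs9 : s ^ 2 - 9 ≠ 0) :
    (2 * tFun12 s - 1) / (tFun12 s * (tFun12 s - 1)) + 1 / (yFun12 s - tFun12 s) =
      16 * s ^ 3 * (s ^ 6 + 21 * s ^ 4 - 93 * s ^ 2 + 135) /
        ((s ^ 2 - 1) * (s ^ 2 - 5) * (s ^ 2 - 9) ^ 3) := by
  rw [two_mul_tFun12_sub_one hs, tFun12_mul_tFun12_sub_one hs, yFun12_sub_tFun12 hs hs15]
  field_simp
  ring

theorem painleveVI_constant_coeff (α δ : ℂ) (hs : s ≠ 0) (hs15 : 15 + s ^ 2 ≠ 0)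
    (hs1 : s ^ 2 - 1 ≠ 0) (hs5 : s ^ 2 - 5 ≠ 0) (hs9 : s ^ 2 - 9 ≠ 0) :
    yFun12 s * (yFun12 s - 1) / (tFun12 s * (tFun12 s - 1)) *
        (α * ((yFun12 s - tFun12 s) / (tFun12 s * (tFun12 s - 1))) + δ / (yFun12 s - tFun12 s)) =
      1024 * s ^ 7 * (α * (s ^ 2 - 5) / ((15 + s ^ 2) ^ 3 * (s ^ 2 - 1) * (s ^ 2 - 9) ^ 2)
        + δ / ((15 + s ^ 2) * (s ^ 2 - 5) * (s ^ 2 - 9) ^ 3)) := by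
  rw [tFun12_mul_tFun12_sub_one hs, yFun12_mul_yFun12_sub_one hs hs15, yFun12_sub_tFun12 hs hs15]
  field_simp
  ring

theorem sq_sub_nine_ne_zero_of_deriv_tFun12_ne_zero (hs : s ≠ 0) (hdt : deriv tFun12 s ≠ 0) :
    s ^ 2 - 9 ≠ 0 := by
  intro hs9
  simp [deriv_tFun12 hs, hs9] at hdt

theorem sq_sub_one_ne_zero_of_tFun12_ne (hs : s ≠ 0) (ht0 : tFun12 s ≠ 0) (ht1 : tFun12 s ≠ 1) :
    s ^ 2 - 1 ≠ 0 := by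
  intro hs1
  have hprod := mul_ne_zero ht0 (sub_ne_zero.2 ht1)
  simp [tFun12_mul_tFun12_sub_one hs, hs1] at hprod

theorem sq_sub_five_ne_zero_of_yFun12_ne_tFun12 (hs : s ≠ 0) (hs15 : 15 + s ^ 2 ≠ 0)
    (hyt : yFun12 s ≠ tFun12 s) :
    s ^ 2 - 5 ≠ 0 := by
  intro hs5
  have hdiff := sub_ne_zero.2 hyt
  simp [yFun12_sub_tFun12 hs hs15, hs5] at hdiff

end

/-- Parametric algebraic solution of the sixth Painlevé equation. -/
theorem stmt_12 (s : ℂ)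
    (h1 : s ≠ 0)
    (h2 : 15+s^2 ≠ 0)
    (hdt : deriv tFun12 s ≠ 0)
    (ht0 : tFun12 s ≠ 0) (ht1 : tFun12 s ≠ 1)
    (hy0 : yFun12 s ≠ 0) (hy1 : yFun12 s ≠ 1) (hyt : yFun12 s ≠ tFun12 s) :
    deriv (fun u => deriv yFun12 u / deriv tFun12 u) s / deriv tFun12 s =
      (1/2) * (1/(yFun12 s) + 1/(yFun12 s - 1) + 1/(yFun12 s - tFun12 s)) *
          (deriv yFun12 s / deriv tFun12 s)^2
        - (1/(tFun12 s) + 1/(tFun12 s - 1) + 1/(yFun12 s - tFun12 s)) *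
          (deriv yFun12 s / deriv tFun12 s)
        + (yFun12 s * (yFun12 s - 1) * (yFun12 s - tFun12 s) /
            ((tFun12 s)^2 * (tFun12 s - 1)^2)) *
          ((1/2 : ℂ) + (0 : ℂ) * tFun12 s / (yFun12 s)^2
            + (0 : ℂ) * (tFun12 s - 1) / (yFun12 s - 1)^2
            + (3/8 : ℂ) * tFun12 s * (tFun12 s - 1) / (yFun12 s - tFun12 s)^2) := by
  change _ = painleveVIRhs (1/2) 0 0 (3/8) (tFun12 s) (yFun12 s) (deriv yFun12 s / deriv tFun12 s)
  have hs9 := sq_sub_nine_ne_zero_of_deriv_tFun12_ne_zero h1 hdt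
  have hs1 := sq_sub_one_ne_zero_of_tFun12_ne h1 ht0 ht1
  have hs5 := sq_sub_five_ne_zero_of_yFun12_ne_tFun12 h1 h2 hyt
  rw [painleveVIRhs_zero_zero _ _ _ ht0 ht1 hy0 hy1 hyt,
    painleveVI_quadratic_coeff h1 h2 hs1 hs5 hs9, painleveVI_linear_coeff h1 h2 hs1 hs5 hs9,
    painleveVI_constant_coeff _ _ h1 h2 hs1 hs5 hs9, deriv_yFun12_div_deriv_tFun12 h1 h2 hs9,
    deriv_deriv_yFun12_div_deriv_tFun12 h1 h2 hs9, deriv_tFun12 h1]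
  field_simp
  ring
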